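/- Let I be a finite index set with |I| ≥ 2, let 𝒜 = (A_i)_{i∈I} be a uniformly hyperbolic family in SL₂(ℝ) with attractor K, let p be a nondegenerate probability vector, and let ν be the stationary measure of (𝒜,p). Then τ(ν,q) ≤ min{τ̃(q), q−1} for every q > 1. -/

import Mathlib

/-!
Let `t` be a positive zero of the pressure. The bound `τ(ν,q) ≤ q - 1` is Jensen's inequality for
`2 ^ m` arcs (`lqSum_ge`). For `τ(ν,q) ≤ t` the idea is that the image of `ν` under `A_w` puts a
definite mass into a single arc of length about `‖A_w‖⁻²`.

If `ν` charges some arc of every dyadic level with mass at least `1/18`, then `Σ ν(I)^q` is bounded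
below and the spectrum is nonpositive (`lqSpectrum_le_of_concentrated`). Otherwise all arcs of some
level have mass less than `1/18`. For `B` in `SL₂(ℝ)`, the directions that `B` stretches by at most
`κ ‖B‖` are at angles of sine at most `2κ` from each other (`sin_sq_le_of_stretch_le`), so for small
`κ` they have mass at most `1/2`. The remaining directions have images at angles of sine at most
`(κ ‖B‖)⁻²` from each other, because `B` preserves area. Hence some arc of level `m` receives mass at
least `c`, uniformly in `B` with `‖B‖² ≥ 2 ^ m` (`exists_heavy_arc`).

Iterating `ν = Σ pᵢ (Aᵢ)_* ν` and using superadditivity of `x ↦ x ^ q`, for any set `W` of words of one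
length with `‖A_w‖² ≥ 2 ^ m` one gets `Σ_I ν(I)^q ≥ c ^ q Σ_{w ∈ W} p_w^q` (`lqSum_lower`). The
pressure sum `Σ p_w^q ‖A_w‖^{2t}` over words of length `n` is `2^{o(n)}`, and `⌊log ‖A_w‖²⌋` takes
only `O(n)` values. By pigeonhole one value `m` gives `2^{mt} Σ p_w^q ≥ 2^{-o(n)}` (`exists_scale`).
Uniform hyperbolicity makes `m` at least proportional to `n`, so the error is `o(m)` and these `m` tend
to infinity. As `τ` is a `liminf`, such levels suffice, and no stopping times are needed.
-/
open MeasureTheory Filter Set Topology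

namespace Paper

noncomputable section

abbrev Mat2 : Type := Matrix (Fin 2) (Fin 2) ℝ
abbrev SL2 : Type := Matrix.SpecialLinearGroup (Fin 2) ℝ

/-- The operator norm on 2×2 real matrices induced by the Euclidean norm on ℝ². -/
def opNorm (M : Mat2) : ℝ := ‖(Matrix.toEuclideanLin M).toContinuousLinearMap‖

/-- The product `A_{i₁} ⋯ A_{i_n}` of the matrices along a word `w = (i₁, …, i_n)`. -/
def wordProd {ι : Type*} (A : ι → SL2) (w : List ι) : SL2 := (w.map A).prod

/-- The product `p_{i₁} ⋯ p_{i_n}` of the weights along a word `w = (i₁, …, i_n)`. -/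
def wordWeight {ι : Type*} (p : ι → ℝ) (w : List ι) : ℝ := (w.map p).prod

/-- A finite family in SL₂(ℝ) is uniformly hyperbolic if `‖A_i‖ ≥ c rⁿ` for all words of
length `n ≥ 1`. -/
def UniformlyHyperbolic {ι : Type*} (A : ι → SL2) : Prop :=
  ∃ c > (0:ℝ), ∃ r > (1:ℝ), ∀ w : List ι, w ≠ [] →
    c * r ^ w.length ≤ opNorm (wordProd A w : Mat2)

/-- Strongly Diophantine: distinct words of the same length give matrices that are
exponentially separated. -/
def StronglyDiophantine {ι : Type*} (A : ι → SL2) : Prop :=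
  ∃ c ∈ Set.Ioo (0:ℝ) 1, ∀ w w' : List ι, w ≠ [] → w.length = w'.length → w ≠ w' →
    c ^ w.length ≤ opNorm ((wordProd A w : Mat2) - (wordProd A w' : Mat2))

/-- The real projective line. -/
abbrev RP1 : Type := Projectivization ℝ (Fin 2 → ℝ)

lemma cos_sin_ne_zero (θ : ℝ) : ![Real.cos θ, Real.sin θ] ≠ 0 := by
  intro h
  have h0 : Real.cos θ = 0 := by simpa using congrFun h 0
  have h1 : Real.sin θ = 0 := by simpa using congrFun h 1
  have h2 := Real.sin_sq_add_cos_sq θ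
  rw [h0, h1] at h2
  norm_num at h2

/-- The point of ℝP¹ in the direction of angle `θ`. -/
def dir (θ : ℝ) : RP1 := Projectivization.mk ℝ ![Real.cos θ, Real.sin θ] (cos_sin_ne_zero θ)

/-- The quotient topology on ℝP¹ (expressed through the angle parametrization). -/
instance : TopologicalSpace RP1 := TopologicalSpace.coinduced dir inferInstance

/-- The Borel σ-algebra on ℝP¹. -/
instance : MeasurableSpace RP1 := borel RP1

/-- The natural action of `A ∈ SL₂(ℝ)` on ℝP¹, `A·[v] = [Av]`. -/
def pact (A : SL2) : RP1 → RP1 :=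
  Projectivization.map (Matrix.SpecialLinearGroup.toLin' A).toLinearMap
    (Matrix.SpecialLinearGroup.toLin' A).injective

/-- `K` is the attractor of the family `A`: the (unique) nonempty compact set with
`K = ⋃ᵢ Aᵢ·K`. -/
def IsAttractor {ι : Type*} [Fintype ι] (A : ι → SL2) (K : Set RP1) : Prop :=
  K.Nonempty ∧ IsCompact K ∧ K = ⋃ i : ι, pact (A i) '' K

/-- `ν` is stationary for the family `A` with weights `p`: `ν = Σ_i p_i (A_i)_* ν`. -/
def IsStationary {ι : Type*} [Fintype ι] (A : ι → SL2) (p : ι → ℝ) (ν : Measure RP1) : Prop :=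
  ν = ∑ i : ι, ENNReal.ofReal (p i) • Measure.map (pact (A i)) ν

/-- The `k`-th arc of the `2^{-m}` dyadic partition of ℝP¹. -/
def dyadic (m k : ℕ) : Set RP1 :=
  dir '' Set.Ico (Real.pi * k / 2 ^ m) (Real.pi * (k + 1) / 2 ^ m)

/-- The concentric doubled arc `2I` of the `k`-th arc of the `2^{-m}` dyadic partition. -/
def dyadic2 (m k : ℕ) : Set RP1 :=
  dir '' Set.Ico (Real.pi * ((k : ℝ) - 1 / 2) / 2 ^ m) (Real.pi * ((k : ℝ) + 3 / 2) / 2 ^ m)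

/-- `Σ_{I ∈ 𝒟_m} ν(I)^q`. -/
def lqSum (ν : Measure RP1) (q : ℝ) (m : ℕ) : ℝ :=
  ∑ k ∈ Finset.range (2 ^ m), ((ν (dyadic m k)).toReal) ^ q

/-- The L^q spectrum `τ(ν,q) = liminf_m −(1/m) log₂ Σ_{I∈𝒟_m} ν(I)^q`. -/
def lqSpectrum (ν : Measure RP1) (q : ℝ) : ℝ :=
  Filter.liminf (fun m : ℕ => -(1 / (m : ℝ)) * Real.logb 2 (lqSum ν q m)) Filter.atTop

/-- `(1/n) log₂ Σ_{i ∈ Iⁿ} p_i^q ‖A_i‖^{2s}`, the `n`-th approximant of the pressure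
`Ψ_q(s)`. -/
def psiAvg {ι : Type*} [Fintype ι] (A : ι → SL2) (p : ι → ℝ) (q s : ℝ) (n : ℕ) : ℝ :=
  (1 / (n : ℝ)) * Real.logb 2
    (∑ w : Fin n → ι,
      (wordWeight p (List.ofFn w)) ^ q * (opNorm (wordProd A (List.ofFn w) : Mat2)) ^ (2 * s))

/-- `t = τ̃(q)`: `t` is the unique positive zero of the pressure function `Ψ_q`. -/
def IsPressureZero {ι : Type*} [Fintype ι] (A : ι → SL2) (p : ι → ℝ) (q t : ℝ) : Prop :=
  0 < t ∧
  Filter.Tendsto (fun n => psiAvg A p q t n) Filter.atTop (nhds 0) ∧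
  ∀ s : ℝ, 0 < s → Filter.Tendsto (fun n => psiAvg A p q s n) Filter.atTop (nhds 0) → s = t

/-- The angle metric on ℝP¹: `d([v],[w]) = arccos(|⟨v,w⟩| / (‖v‖ ‖w‖))`. -/
def pdist (x y : RP1) : ℝ :=
  Real.arccos (|x.rep 0 * y.rep 0 + x.rep 1 * y.rep 1| /
    (Real.sqrt (x.rep 0 ^ 2 + x.rep 1 ^ 2) * Real.sqrt (y.rep 0 ^ 2 + y.rep 1 ^ 2)))

/-- The open ball in ℝP¹ of radius `r` and center `x`. -/
def pball (x : RP1) (r : ℝ) : Set RP1 := {y | pdist x y < r}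

instance : Fact (0 < Real.pi) := ⟨Real.pi_pos⟩

/-- The angle coordinate `Θ : ℝP¹ → ℝ/πℤ`. -/
def theta (x : RP1) : AddCircle Real.pi :=
  ((Complex.arg ((x.rep 0 : ℂ) + (x.rep 1 : ℂ) * Complex.I) : ℝ) : AddCircle Real.pi)

/-- `w` is a `2^m` stopping word for the family `A`. -/
def IsStopping {ι : Type*} (A : ι → SL2) (m : ℕ) (w : List ι) : Prop :=
  w ≠ [] ∧
  (∀ j : ℕ, 1 ≤ j → j < w.length → opNorm (wordProd A (w.take j) : Mat2) ^ 2 < (2:ℝ) ^ m) ∧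
  (2 : ℝ) ^ m ≤ opNorm (wordProd A w : Mat2) ^ 2

/-- `Σ_{i ∈ Ω_m} p_i^q`, the `L^q` sum over the `2^m` stopping words. -/
def stopSum {ι : Type*} [Fintype ι] (A : ι → SL2) (p : ι → ℝ) (q : ℝ) (m : ℕ) : ℝ :=
  ∑' w : List ι,
    Set.indicator {w : List ι | IsStopping A m w} (fun w => (wordWeight p w) ^ q) w

/-- `Σ_{J ∈ 𝒟_{s+m}(I)} ν(J)^q` for `I` the `k`-th arc of `𝒟_s`. -/
def localSum (ν : Measure RP1) (q : ℝ) (s m k : ℕ) : ℝ :=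
  ∑ j ∈ Finset.range (2 ^ (s + m)),
    Set.indicator {j : ℕ | (dyadic (s + m) j ∩ dyadic s k).Nonempty}
      (fun j => (ν (dyadic (s + m) j)).toReal ^ q) j


/-! ### Operator norms and stretching of directions -/

/-- The squared Euclidean length of `M (cos θ, sin θ)`. -/
def stretch (M : Mat2) (θ : ℝ) : ℝ :=
  (M 0 0 * Real.cos θ + M 0 1 * Real.sin θ) ^ 2 + (M 1 0 * Real.cos θ + M 1 1 * Real.sin θ) ^ 2

lemma opNorm_nonneg (M : Mat2) : 0 ≤ opNorm M := norm_nonneg _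

lemma opNorm_le_of_sq_le (M : Mat2) {C : ℝ} (hC : 0 ≤ C)
    (h : ∀ a b : ℝ, (M 0 0 * a + M 0 1 * b) ^ 2 + (M 1 0 * a + M 1 1 * b) ^ 2
      ≤ C ^ 2 * (a ^ 2 + b ^ 2)) : opNorm M ≤ C := by
  refine ContinuousLinearMap.opNorm_le_bound _ hC fun v => ?_
  have h1 := h (v 0) (v 1)
  refine (sq_le_sq₀ (norm_nonneg _) (by positivity)).1 ?_
  rw [mul_pow, EuclideanSpace.norm_sq_eq, EuclideanSpace.norm_sq_eq]
  simpa [Fin.sum_univ_two, Matrix.toEuclideanLin, Matrix.toLpLin, Matrix.mulVec, dotProduct] using h1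

lemma opNorm_mul_le (M N : Mat2) : opNorm (M * N) ≤ opNorm M * opNorm N := by
  have : (Matrix.toEuclideanLin (M * N)).toContinuousLinearMap
      = (Matrix.toEuclideanLin M).toContinuousLinearMap.comp
        (Matrix.toEuclideanLin N).toContinuousLinearMap := by
    ext v i
    simp [Matrix.toEuclideanLin, Matrix.toLpLin]
  unfold opNorm
  rw [this]
  exact ContinuousLinearMap.opNorm_comp_le _ _

lemma opNorm_one_le : opNorm (1 : Mat2) ≤ 1 :=
  opNorm_le_of_sq_le _ zero_le_one fun a b => by simp

/-- Two directions of the real line that `M` stretches by at most `κ ‖M‖` form an angle of sine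
at most `2κ`: otherwise they would be a basis in which `M` is visibly too small. -/
lemma sin_sq_le_of_stretch_le (M : Mat2) (hM : 0 < opNorm M) {κ θ φ : ℝ} (hκ : 0 < κ)
    (hθ : stretch M θ ≤ (κ * opNorm M) ^ 2) (hφ : stretch M φ ≤ (κ * opNorm M) ^ 2) :
    |Real.sin (φ - θ)| ≤ 2 * κ := by
  set s := Real.sin (φ - θ) with hs
  by_cases h0 : s = 0
  · rw [h0]; simp; positivity
  have hspos : 0 < |s| := abs_pos.2 h0
  have hs' : s = Real.sin φ * Real.cos θ - Real.cos φ * Real.sin θ := Real.sin_sub _ _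
  have key : opNorm M ≤ 2 * κ * opNorm M / |s| := by
    refine opNorm_le_of_sq_le _ (by positivity) fun a b => ?_
    -- Cramer's rule: `(a, b) = α (cos θ, sin θ) + β (cos φ, sin φ)`.
    set α := (a * Real.sin φ - b * Real.cos φ) / s with hα
    set β := (b * Real.cos θ - a * Real.sin θ) / s with hβ
    have ea : a = α * Real.cos θ + β * Real.cos φ := by
      rw [hα, hβ]; field_simp; rw [hs']; ring
    have eb : b = α * Real.sin θ + β * Real.sin φ := by
      rw [hα, hβ]; field_simp; rw [hs']; ring
    have hαb : α ^ 2 ≤ (a ^ 2 + b ^ 2) / s ^ 2 := by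
      rw [hα, div_pow]
      gcongr
      nlinarith [sq_nonneg (a * Real.cos φ + b * Real.sin φ), Real.sin_sq_add_cos_sq φ]
    have hβb : β ^ 2 ≤ (a ^ 2 + b ^ 2) / s ^ 2 := by
      rw [hβ, div_pow]
      gcongr
      nlinarith [sq_nonneg (a * Real.cos θ + b * Real.sin θ), Real.sin_sq_add_cos_sq θ]
    have hpar : (M 0 0 * a + M 0 1 * b) ^ 2 + (M 1 0 * a + M 1 1 * b) ^ 2
        ≤ 2 * (α ^ 2 * stretch M θ + β ^ 2 * stretch M φ) := by
      rw [ea, eb]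
      unfold stretch
      generalize Real.cos θ = c1
      generalize Real.cos φ = c2
      generalize Real.sin θ = s1
      generalize Real.sin φ = s2
      nlinarith [sq_nonneg (α * (M 0 0 * c1 + M 0 1 * s1) - β * (M 0 0 * c2 + M 0 1 * s2)),
        sq_nonneg (α * (M 1 0 * c1 + M 1 1 * s1) - β * (M 1 0 * c2 + M 1 1 * s2))]
    calc _ ≤ 2 * (α ^ 2 * stretch M θ + β ^ 2 * stretch M φ) := hpar
      _ ≤ 2 * ((a ^ 2 + b ^ 2) / s ^ 2 * (κ * opNorm M) ^ 2
            + (a ^ 2 + b ^ 2) / s ^ 2 * (κ * opNorm M) ^ 2) := by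
          have := sq_nonneg (M 0 0 * Real.cos θ + M 0 1 * Real.sin θ)
          unfold stretch at *
          gcongr
      _ = (2 * κ * opNorm M / |s|) ^ 2 * (a ^ 2 + b ^ 2) := by
          rw [div_pow, sq_abs]; ring
  rw [le_div_iff₀ hspos] at key
  nlinarith

/-! ### The action on the projective line -/

/-- Polar coordinates with angle in `[0, π)` and a radius of either sign. -/
lemma exists_angle (a b : ℝ) (h : ![a, b] ≠ 0) : ∃ θ ∈ Set.Ico 0 Real.pi, ∃ l : ℝ, l ≠ 0 ∧
    a = l * Real.cos θ ∧ b = l * Real.sin θ := by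
  set z : ℂ := ⟨a, b⟩ with hz
  have hz0 : z ≠ 0 := by
    intro hh
    apply h
    have h1 := congrArg Complex.re hh
    have h2 := congrArg Complex.im hh
    simp [hz] at h1 h2
    simp [h1, h2]
  have hn : ‖z‖ ≠ 0 := norm_ne_zero_iff.2 hz0
  have ha : a = ‖z‖ * Real.cos z.arg := by
    rw [Complex.norm_mul_cos_arg]
  have hb : b = ‖z‖ * Real.sin z.arg := by
    rw [Complex.norm_mul_sin_arg]
  have h1 := Complex.neg_pi_lt_arg z
  have h2 := Complex.arg_le_pi z
  rcases lt_or_ge z.arg 0 with h3 | h3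
  · refine ⟨z.arg + Real.pi, ⟨by linarith, by linarith⟩, -‖z‖, neg_ne_zero.2 hn, ?_, ?_⟩
    · rw [Real.cos_add_pi]; linarith
    · rw [Real.sin_add_pi]; linarith
  · rcases h2.lt_or_eq with h4 | h4
    · exact ⟨z.arg, ⟨h3, h4⟩, ‖z‖, hn, ha, hb⟩
    · refine ⟨0, ⟨le_rfl, Real.pi_pos⟩, -‖z‖, neg_ne_zero.2 hn, ?_, ?_⟩
      · rw [h4] at ha; simpa using ha
      · rw [h4] at hb; simpa using hb

lemma dir_eq_mk {a b θ l : ℝ} (h : ![a, b] ≠ 0)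
    (ha : a = l * Real.cos θ) (hb : b = l * Real.sin θ) :
    Projectivization.mk ℝ ![a, b] h = dir θ := by
  unfold dir
  rw [Projectivization.mk_eq_mk_iff']
  exact ⟨l, by simp [ha, hb]⟩

lemma exists_dir (x : RP1) : ∃ θ ∈ Set.Ico 0 Real.pi, x = dir θ := by
  induction x using Projectivization.ind with
  | h v hv =>
    have e : v = ![v 0, v 1] := by ext i; fin_cases i <;> rfl
    have hv' : ![v 0, v 1] ≠ 0 := e ▸ hv
    obtain ⟨θ, hθ, l, hl, ha, hb⟩ := exists_angle (v 0) (v 1) hv'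
    refine ⟨θ, hθ, ?_⟩
    rw [← dir_eq_mk hv' ha hb]
    congr 1

lemma image_ne_zero (B : SL2) (θ : ℝ) :
    ![B.1 0 0 * Real.cos θ + B.1 0 1 * Real.sin θ,
      B.1 1 0 * Real.cos θ + B.1 1 1 * Real.sin θ] ≠ 0 := by
  intro h
  have hd := B.2
  rw [Matrix.det_fin_two] at hd
  have h0 : B.1 0 0 * Real.cos θ + B.1 0 1 * Real.sin θ = 0 := by simpa using congrFun h 0
  have h1 : B.1 1 0 * Real.cos θ + B.1 1 1 * Real.sin θ = 0 := by simpa using congrFun h 1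
  have hc : Real.cos θ = 0 := by linear_combination (-Real.cos θ) * hd + B.1 1 1 * h0 - B.1 0 1 * h1
  have hs : Real.sin θ = 0 := by linear_combination (-Real.sin θ) * hd + B.1 0 0 * h1 - B.1 1 0 * h0
  have := Real.sin_sq_add_cos_sq θ
  rw [hc, hs] at this
  norm_num at this

lemma pact_dir (B : SL2) (θ : ℝ) : pact B (dir θ) = Projectivization.mk ℝ _ (image_ne_zero B θ) := by
  unfold pact dir
  rw [Projectivization.map_mk]
  congr 1
  ext i
  fin_cases i <;> simp [Matrix.SpecialLinearGroup.toLin', Matrix.mulVec, dotProduct, Fin.sum_univ_two]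

/-- The direction of the image of a unit vector, together with the stretching factor. -/
lemma exists_image_angle (B : SL2) (θ : ℝ) : ∃ φ ∈ Set.Ico 0 Real.pi, ∃ l : ℝ,
    pact B (dir θ) = dir φ ∧ B.1 0 0 * Real.cos θ + B.1 0 1 * Real.sin θ = l * Real.cos φ ∧
    B.1 1 0 * Real.cos θ + B.1 1 1 * Real.sin θ = l * Real.sin φ ∧ l ^ 2 = stretch B.1 θ := by
  obtain ⟨φ, hφ, l, hl, ha, hb⟩ := exists_angle _ _ (image_ne_zero B θ)
  refine ⟨φ, hφ, l, ?_, ha, hb, ?_⟩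
  · rw [pact_dir, dir_eq_mk _ ha hb]
  · unfold stretch
    rw [ha, hb]
    linear_combination (-l^2) * Real.sin_sq_add_cos_sq φ

lemma pact_mul (B C : SL2) : pact (B * C) = pact B ∘ pact C := by
  funext x
  induction x using Projectivization.ind with
  | h v hv =>
    simp only [pact, Function.comp, Projectivization.map_mk]
    congr 1
    simp [Matrix.SpecialLinearGroup.toLin']

lemma pact_one : pact 1 = id := by
  funext x
  induction x using Projectivization.ind with
  | h v hv =>
    simp only [pact, id, Projectivization.map_mk]
    congr 1
    simp [Matrix.SpecialLinearGroup.toLin']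

lemma continuous_dir : Continuous dir := continuous_coinduced_rng

/-- Continuity of the action holds since the angle of `B (cos θ, sin θ)` is continuous as an element of
`ℝ/2πℤ`, through which `dir` factors. -/
lemma continuous_pact (B : SL2) : Continuous (pact B) := by
  rw [continuous_coinduced_dom]
  have hper : Function.Periodic dir (2 * Real.pi) := fun θ => by
    simp [dir]
  have hD : Continuous (Function.Periodic.lift hper : AddCircle (2 * Real.pi) → RP1) :=
    continuous_coinduced_dom.2 continuous_dir
  set z : ℝ → ℂ := fun θ => ⟨B.1 0 0 * Real.cos θ + B.1 0 1 * Real.sin θ,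
    B.1 1 0 * Real.cos θ + B.1 1 1 * Real.sin θ⟩ with hz
  have hz0 : ∀ θ, z θ ≠ 0 := by
    intro θ hh
    apply image_ne_zero B θ
    have h1 := congrArg Complex.re hh
    have h2 := congrArg Complex.im hh
    simp only [hz, Complex.zero_re, Complex.zero_im] at h1 h2
    rw [h1, h2]; simp
  have hzc : Continuous z := by
    have : z = fun θ => ((B.1 0 0 * Real.cos θ + B.1 0 1 * Real.sin θ : ℝ) : ℂ)
        + ((B.1 1 0 * Real.cos θ + B.1 1 1 * Real.sin θ : ℝ) : ℂ) * Complex.I := by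
      funext θ
      rw [← Complex.mk_eq_add_mul_I]
    rw [this]
    fun_prop
  have hA : Continuous fun θ => ((z θ).arg : Real.Angle) :=
    continuous_iff_continuousAt.2 fun θ =>
      (Complex.continuousAt_arg_coe_angle (hz0 θ)).comp hzc.continuousAt
  have e : pact B ∘ dir = (Function.Periodic.lift hper : AddCircle (2 * Real.pi) → RP1) ∘
      fun θ => ((z θ).arg : Real.Angle) := by
    funext θ
    have : (Function.Periodic.lift hper ((z θ).arg : Real.Angle)) = dir (z θ).arg :=
      Function.Periodic.lift_coe hper _
    simp only [Function.comp]
    rw [this, pact_dir]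
    refine dir_eq_mk _ (l := ‖z θ‖) ?_ ?_
    · rw [Complex.norm_mul_cos_arg]
    · rw [Complex.norm_mul_sin_arg]
  rw [e]
  exact hD.comp hA

/-! ### Dyadic coverings and heavy arcs -/

/-- The index of the dyadic arc of level `m` that contains the direction of angle `θ ∈ [0, π)`. -/
def idx (m : ℕ) (θ : ℝ) : ℕ := ⌊2 ^ m * θ / Real.pi⌋₊

lemma idx_lt (m : ℕ) {θ : ℝ} (hθ : θ ∈ Set.Ico 0 Real.pi) : idx m θ < 2 ^ m := by
  have hπ := Real.pi_pos
  unfold idx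
  rw [Nat.floor_lt (by have := hθ.1; positivity), div_lt_iff₀ hπ]
  push_cast
  have := hθ.2
  gcongr

lemma dir_mem_dyadic (m : ℕ) {θ : ℝ} (hθ : θ ∈ Set.Ico 0 Real.pi) :
    dir θ ∈ dyadic m (idx m θ) := by
  have hπ := Real.pi_pos
  have h0 : 0 ≤ 2 ^ m * θ / Real.pi := by have := hθ.1; positivity
  refine ⟨θ, ⟨?_, ?_⟩, rfl⟩
  · have := Nat.floor_le h0
    rw [le_div_iff₀ hπ] at this
    rw [div_le_iff₀ (by positivity)]
    unfold idx
    linarith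
  · have := Nat.lt_floor_add_one (2 ^ m * θ / Real.pi)
    rw [div_lt_iff₀ hπ] at this
    rw [lt_div_iff₀ (by positivity)]
    unfold idx
    linarith

/-- Jordan's inequality turns a bound on the sine of an angle into a bound on the difference of
indices. The first two alternatives account for arcs that are close across the angle `0 = π`. -/
lemma idx_close (m L : ℕ) {s θ φ : ℝ} (hθ : θ ∈ Set.Ico 0 Real.pi) (hφ : φ ∈ Set.Ico 0 Real.pi)
    (hs : |Real.sin (θ - φ)| ≤ s) (hL : 2 ^ m * s / 2 + 1 ≤ L) :
    idx m θ < L ∨ 2 ^ m ≤ idx m θ + L ∨ (idx m θ ≤ idx m φ + L ∧ idx m φ ≤ idx m θ + L) := by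
  have hπ := Real.pi_pos
  have h2 : (0:ℝ) < 2 ^ m := by positivity
  set a := 2 ^ m * θ / Real.pi with ha
  set b := 2 ^ m * φ / Real.pi with hb
  have ha0 : 0 ≤ a := by have := hθ.1; positivity
  have hb0 : 0 ≤ b := by have := hφ.1; positivity
  have fa : (idx m θ : ℝ) ≤ a := Nat.floor_le ha0
  have fb : (idx m φ : ℝ) ≤ b := Nat.floor_le hb0
  have ga : a < (idx m θ : ℝ) + 1 := Nat.lt_floor_add_one a
  have gb : b < (idx m φ : ℝ) + 1 := Nat.lt_floor_add_one b
  have hab : a - b = 2 ^ m / Real.pi * (θ - φ) := by rw [ha, hb]; ring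
  have scale : ∀ x : ℝ, 2 / Real.pi * x ≤ s → 2 ^ m / Real.pi * x ≤ L - 1 := by
    intro x hx
    have : 2 ^ m / Real.pi * x = 2 ^ m / 2 * (2 / Real.pi * x) := by field_simp
    rw [this]
    have := mul_le_mul_of_nonneg_left hx (show (0:ℝ) ≤ 2 ^ m / 2 by positivity)
    linarith
  rcases le_or_gt |θ - φ| (Real.pi / 2) with h | h
  · right; right
    have h3 := scale _ ((Real.mul_abs_le_abs_sin h).trans hs)
    have h4 : |a - b| ≤ L - 1 := by
      rw [hab, abs_mul, abs_of_pos (by positivity)]; exact h3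
    rw [abs_le] at h4
    constructor <;> rw [← Nat.cast_le (α := ℝ)] <;> push_cast <;> linarith
  · have wrap : ∀ x : ℝ, Real.pi / 2 < x → x < Real.pi → |Real.sin x| ≤ s →
        2 ^ m - (L - 1) ≤ 2 ^ m / Real.pi * x := by
      intro x h5 h6 h7
      have h8 := Real.mul_le_sin (x := Real.pi - x) (by linarith) (by linarith)
      rw [Real.sin_pi_sub] at h8
      have h9 := scale _ (h8.trans ((le_abs_self _).trans h7))
      have : 2 ^ m / Real.pi * (Real.pi - x) = 2 ^ m - 2 ^ m / Real.pi * x := by field_simp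
      linarith
    have := hθ.1
    have := hθ.2
    have := hφ.1
    have := hφ.2
    rcases lt_abs.1 h with h | h
    · right; left
      have h3 := wrap _ h (by linarith) hs
      rw [← Nat.cast_le (α := ℝ)]; push_cast; linarith
    · left
      have h3 := wrap _ h (by linarith) (by rw [Real.sin_neg, abs_neg]; exact hs)
      have hb1 : b < 2 ^ m := by
        rw [hb, div_lt_iff₀ hπ]; gcongr
      rw [← Nat.cast_lt (α := ℝ)]; linarith

/-- A set of directions whose pairwise angles have sine at most `s` meets boundedly many
dyadic arcs of level `m`, as long as `2 ^ m * s` is bounded. -/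
lemma exists_cover (m L : ℕ) {s : ℝ} (T : Set ℝ) (hT : T ⊆ Set.Ico 0 Real.pi)
    (hs : ∀ θ ∈ T, ∀ φ ∈ T, |Real.sin (θ - φ)| ≤ s) (hL : 2 ^ m * s / 2 + 1 ≤ L) :
    ∃ F : Finset ℕ, F ⊆ Finset.range (2 ^ m) ∧ F.card ≤ 4 * L + 1 ∧ ∀ θ ∈ T, idx m θ ∈ F := by
  rcases T.eq_empty_or_nonempty with rfl | ⟨φ, hφ⟩
  · exact ⟨∅, by simp, by simp, by simp⟩
  refine ⟨(Finset.range (2 ^ m)) ∩ (Finset.range L ∪ (Finset.Ico (2 ^ m - L) (2 ^ m) ∪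
    Finset.Icc (idx m φ - L) (idx m φ + L))), Finset.inter_subset_left, ?_, ?_⟩
  · refine (Finset.card_le_card Finset.inter_subset_right).trans ?_
    refine (Finset.card_union_le _ _).trans ?_
    have := Finset.card_union_le (Finset.Ico (2 ^ m - L) (2 ^ m))
      (Finset.Icc (idx m φ - L) (idx m φ + L))
    simp only [Finset.card_range, Nat.card_Ico, Nat.card_Icc] at *
    omega
  · intro θ hθ
    have h1 := idx_lt m (hT hθ)
    have h2 := idx_close m L (hT hθ) (hT hφ) (hs _ hθ _ hφ) hL
    simp only [Finset.mem_inter, Finset.mem_union, Finset.mem_range, Finset.mem_Ico,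
      Finset.mem_Icc]
    omega

lemma measureReal_le_of_cover (ν : Measure RP1) [IsProbabilityMeasure ν] (S : Set RP1)
    (F : Finset ℕ) (D : ℕ → Set RP1) (h : S ⊆ ⋃ k ∈ F, D k) :
    ν.real S ≤ ∑ k ∈ F, ν.real (D k) :=
  (measureReal_mono h (measure_ne_top _ _)).trans (measureReal_biUnion_finset_le _ _)

/-- If no dyadic arc of some level `M` has mass `1/18`, then every matrix `B` of `SL₂(ℝ)` maps a
definite part of `ν` into a single arc of length comparable with `‖B‖⁻²`: the directions that `B`
stretches by less than `κ ‖B‖` fit into `9` arcs of level `M`, and the other ones have images at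
angles `O(‖B‖⁻²)` from each other because `B` preserves area. -/
lemma exists_heavy_arc (ν : Measure RP1) [IsProbabilityMeasure ν] (M : ℕ)
    (hM : ∀ k < 2 ^ M, ν.real (dyadic M k) < 1 / 18) :
    ∃ c > (0:ℝ), ∀ (B : SL2) (m : ℕ), (2:ℝ) ^ m ≤ opNorm B.1 ^ 2 →
      ∃ k < 2 ^ m, c ≤ ν.real (pact B ⁻¹' dyadic m k) := by
  set κ : ℝ := 1 / 2 ^ M with hκ
  have hκ0 : 0 < κ := by positivity
  set L : ℕ := ⌈1 / (2 * κ ^ 2) + 1⌉₊ with hL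
  refine ⟨1 / (2 * (4 * L + 1)), by positivity, fun B m hm => ?_⟩
  have hN0 : 0 < opNorm B.1 := by
    rcases (opNorm_nonneg B.1).lt_or_eq with h | h
    · exact h
    · rw [← h] at hm
      have : (0:ℝ) < 2 ^ m := by positivity
      norm_num at hm
      linarith
  set G : Set ℝ := {θ | θ ∈ Set.Ico 0 Real.pi ∧ (κ * opNorm B.1) ^ 2 < stretch B.1 θ} with hG
  set G' : Set ℝ := {θ | θ ∈ Set.Ico 0 Real.pi ∧ stretch B.1 θ ≤ (κ * opNorm B.1) ^ 2} with hG'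
  have hunion : (Set.univ : Set RP1) ⊆ dir '' G ∪ dir '' G' := by
    intro x _
    obtain ⟨θ, hθ, rfl⟩ := exists_dir x
    rcases lt_or_ge ((κ * opNorm B.1) ^ 2) (stretch B.1 θ) with h | h
    · exact Or.inl ⟨θ, ⟨hθ, h⟩, rfl⟩
    · exact Or.inr ⟨θ, ⟨hθ, h⟩, rfl⟩
  have hone : 1 ≤ ν.real (dir '' G) + ν.real (dir '' G') := by
    calc 1 = ν.real Set.univ := by simp
      _ ≤ ν.real (dir '' G ∪ dir '' G') := measureReal_mono hunion
      _ ≤ _ := measureReal_union_le _ _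
  have hbad : ν.real (dir '' G') ≤ 1 / 2 := by
    obtain ⟨F, hF, hcard, hcov⟩ := exists_cover M 2 (s := 2 * κ) G' (fun θ h => h.1)
      (fun θ hθ φ hφ => sin_sq_le_of_stretch_le B.1 hN0 hκ0 hφ.2 hθ.2)
      (by rw [hκ]; push_cast; field_simp; norm_num)
    have h1 := measureReal_le_of_cover ν (dir '' G') F (dyadic M) (by
      rintro _ ⟨θ, hθ, rfl⟩
      exact Set.mem_iUnion₂.2 ⟨_, hcov θ hθ, dir_mem_dyadic M hθ.1⟩)
    have h2 : ∑ k ∈ F, ν.real (dyadic M k) ≤ F.card • (1 / 18 : ℝ) :=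
      Finset.sum_le_card_nsmul _ _ _ fun k hk => (hM k (Finset.mem_range.1 (hF hk))).le
    have h3 : (F.card : ℝ) ≤ 9 := by exact_mod_cast hcard
    rw [nsmul_eq_mul] at h2
    linarith
  choose! img himg l hl1 hl2 hl3 hl4 using exists_image_angle B
  have hgood : ∀ θ ∈ img '' G, ∀ φ ∈ img '' G,
      |Real.sin (θ - φ)| ≤ 1 / (κ ^ 2 * 2 ^ m) := by
    rintro _ ⟨θ, hθ, rfl⟩ _ ⟨φ, hφ, rfl⟩
    -- `B` preserves the area form.
    have harea : l φ * l θ * Real.sin (img θ - img φ) = Real.sin (θ - φ) := by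
      have hd := B.2
      rw [Matrix.det_fin_two] at hd
      rw [Real.sin_sub, Real.sin_sub]
      have e : l φ * l θ * (Real.sin (img θ) * Real.cos (img φ)
          - Real.cos (img θ) * Real.sin (img φ))
          = (l θ * Real.sin (img θ)) * (l φ * Real.cos (img φ))
          - (l θ * Real.cos (img θ)) * (l φ * Real.sin (img φ)) := by ring
      rw [e, ← hl2, ← hl2, ← hl3, ← hl3]
      linear_combination (Real.sin θ * Real.cos φ - Real.cos θ * Real.sin φ) * hd
    have hsz : ∀ x ∈ G, κ * opNorm B.1 ≤ |l x| := by
      intro x hx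
      have := hx.2
      rw [← hl4 x] at this
      rw [← abs_of_pos (mul_pos hκ0 hN0)]
      exact (sq_lt_sq.1 this).le
    have hprod : κ ^ 2 * 2 ^ m ≤ |l φ| * |l θ| := by
      calc κ ^ 2 * 2 ^ m ≤ κ ^ 2 * opNorm B.1 ^ 2 := by gcongr
        _ = (κ * opNorm B.1) * (κ * opNorm B.1) := by ring
        _ ≤ _ := mul_le_mul (hsz φ hφ) (hsz θ hθ) (by positivity) (abs_nonneg _)
    rw [le_div_iff₀ (by positivity)]
    calc |Real.sin (img θ - img φ)| * (κ ^ 2 * 2 ^ m)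
        ≤ |Real.sin (img θ - img φ)| * (|l φ| * |l θ|) := by gcongr
      _ = |Real.sin (θ - φ)| := by rw [← harea, abs_mul, abs_mul]; ring
      _ ≤ 1 := Real.abs_sin_le_one _
  obtain ⟨F, hF, hcard, hcov⟩ := exists_cover m L (img '' G)
    (by rintro _ ⟨θ, _, rfl⟩; exact himg θ) hgood (by
      refine le_trans (le_of_eq ?_) (Nat.le_ceil _)
      field_simp)
  have h1 := measureReal_le_of_cover ν (dir '' G) F (fun k => pact B ⁻¹' dyadic m k) (by
    rintro _ ⟨θ, hθ, rfl⟩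
    refine Set.mem_iUnion₂.2 ⟨_, hcov _ ⟨θ, hθ, rfl⟩, ?_⟩
    rw [Set.mem_preimage, hl1]
    exact dir_mem_dyadic m (himg θ))
  by_contra! hcon
  have hFne : F.Nonempty := by
    rw [Finset.nonempty_iff_ne_empty]
    rintro rfl
    simp at h1
    linarith
  have h2 : ∑ k ∈ F, ν.real (pact B ⁻¹' dyadic m k) < F.card • (1 / (2 * (4 * L + 1)) : ℝ) :=
    (Finset.sum_lt_sum_of_nonempty hFne fun k hk =>
      hcon k (Finset.mem_range.1 (hF hk))).trans_eq (Finset.sum_const _)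
  rw [nsmul_eq_mul] at h2
  have h3 : (F.card : ℝ) ≤ 4 * L + 1 := by exact_mod_cast hcard
  have h4 : (F.card : ℝ) * (1 / (2 * (4 * L + 1)) : ℝ) ≤ 1 / 2 := by
    rw [mul_one_div, div_le_div_iff₀ (by positivity) (by norm_num)]
    linarith
  linarith

/-! ### Stationarity and `L^q` sums -/

/-- Stationarity, as an inequality valid for arbitrary sets: `Measure.map` is at least the measure of
the preimage, so the measurability of `J` plays no role. -/
lemma stationary_step {ι : Type*} [Fintype ι] (A : ι → SL2) (p : ι → ℝ) (hp : ∀ i, 0 < p i)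
    (ν : Measure RP1) [IsProbabilityMeasure ν] (hν : IsStationary A p ν) (J : Set RP1) :
    ∑ i, p i * ν.real (pact (A i) ⁻¹' J) ≤ ν.real J := by
  have h1 : ∑ i, ENNReal.ofReal (p i) * ν (pact (A i) ⁻¹' J) ≤ ν J := by
    have h2 : ν J = ∑ i, ENNReal.ofReal (p i) * Measure.map (pact (A i)) ν J := by
      conv_lhs => rw [hν]
      simp [Measure.finsetSum_apply]
    rw [h2]
    have : BorelSpace RP1 := ⟨rfl⟩
    exact Finset.sum_le_sum fun i _ => mul_le_mul' le_rfl
      (Measure.le_map_apply (continuous_pact (A i)).measurable.aemeasurable J)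
  have h3 := ENNReal.toReal_mono (measure_ne_top ν J) h1
  rw [ENNReal.toReal_sum (fun i _ => ENNReal.mul_ne_top ENNReal.ofReal_ne_top
    (measure_ne_top _ _))] at h3
  simpa [ENNReal.toReal_mul, ENNReal.toReal_ofReal (hp _).le, Measure.real] using h3

lemma wordWeight_pos {ι : Type*} (p : ι → ℝ) (hp : ∀ i, 0 < p i) (w : List ι) :
    0 < wordWeight p w := by
  refine List.prod_pos fun a ha => ?_
  obtain ⟨i, _, rfl⟩ := List.mem_map.1 ha
  exact hp i

lemma stationary_iterate {ι : Type*} [Fintype ι] (A : ι → SL2) (p : ι → ℝ) (hp : ∀ i, 0 < p i)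
    (ν : Measure RP1) [IsProbabilityMeasure ν] (hν : IsStationary A p ν) (n : ℕ) (J : Set RP1) :
    ∑ w : Fin n → ι, wordWeight p (List.ofFn w) *
      ν.real (pact (wordProd A (List.ofFn w)) ⁻¹' J) ≤ ν.real J := by
  induction n generalizing J with
  | zero => simp [wordWeight, wordProd, pact_one]
  | succ n ih =>
    calc _ = ∑ i, p i * ∑ w : Fin n → ι, wordWeight p (List.ofFn w) *
          ν.real (pact (wordProd A (List.ofFn w)) ⁻¹' (pact (A i) ⁻¹' J)) := by
          rw [← (Fin.consEquiv fun _ => ι).sum_comp, Fintype.sum_prod_type]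
          refine Finset.sum_congr rfl fun i _ => ?_
          rw [Finset.mul_sum]
          refine Finset.sum_congr rfl fun w _ => ?_
          simp [Fin.consEquiv, List.ofFn_succ, wordWeight, wordProd, pact_mul,
            Set.preimage_comp, mul_assoc]
      _ ≤ ∑ i, p i * ν.real (pact (A i) ⁻¹' J) := by
          gcongr with i
          · exact (hp i).le
          · exact ih _
      _ ≤ ν.real J := stationary_step A p hp ν hν J

/-- Superadditivity of `x ↦ x ^ q` on nonnegative reals. -/
lemma sum_rpow_le_rpow_sum' {α : Type*} (s : Finset α) (f : α → ℝ) (hf : ∀ a ∈ s, 0 ≤ f a) {q : ℝ}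
    (hq : 1 ≤ q) : ∑ a ∈ s, f a ^ q ≤ (∑ a ∈ s, f a) ^ q := by
  classical
  induction s using Finset.induction_on with
  | empty => simp [Real.zero_rpow (by linarith : q ≠ 0)]
  | insert a s ha ih =>
    rw [Finset.sum_insert ha, Finset.sum_insert ha]
    have hf' : ∀ b ∈ s, 0 ≤ f b := fun b hb => hf b (Finset.mem_insert_of_mem hb)
    exact (add_le_add_right (ih hf') _).trans
      (Real.add_rpow_le_rpow_add (hf a (Finset.mem_insert_self _ _)) (Finset.sum_nonneg hf') hq)

/-- If every word of `W` carries a piece of `ν` of mass at least `c` into one arc of level `m`, then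
stationarity and superadditivity of `x ↦ x ^ q` bound the `L^q` sum at level `m` from below. -/
lemma lqSum_lower {ι : Type*} [Fintype ι] (A : ι → SL2) (p : ι → ℝ) (hp : ∀ i, 0 < p i)
    (ν : Measure RP1) [IsProbabilityMeasure ν] (hν : IsStationary A p ν) {q c : ℝ} (hq : 1 ≤ q)
    (hc : 0 < c) (m n : ℕ) (W : Finset (Fin n → ι))
    (hW : ∀ w ∈ W, ∃ k < 2 ^ m,
      c ≤ ν.real (pact (wordProd A (List.ofFn w)) ⁻¹' dyadic m k)) :
    c ^ q * ∑ w ∈ W, wordWeight p (List.ofFn w) ^ q ≤ lqSum ν q m := by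
  have hq0 : 0 ≤ q := by linarith
  have hpw : ∀ w : Fin n → ι, 0 ≤ wordWeight p (List.ofFn w) :=
    fun w => (wordWeight_pos p hp _).le
  set a : (Fin n → ι) → ℕ → ℝ :=
    fun w k => ν.real (pact (wordProd A (List.ofFn w)) ⁻¹' dyadic m k) with ha
  have ha0 : ∀ w k, 0 ≤ a w k := fun w k => measureReal_nonneg
  calc c ^ q * ∑ w ∈ W, wordWeight p (List.ofFn w) ^ q
      = ∑ w ∈ W, wordWeight p (List.ofFn w) ^ q * c ^ q := by
        rw [Finset.mul_sum]; exact Finset.sum_congr rfl fun _ _ => mul_comm _ _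
    _ ≤ ∑ w ∈ W, wordWeight p (List.ofFn w) ^ q * ∑ k ∈ Finset.range (2 ^ m), a w k ^ q := by
        refine Finset.sum_le_sum fun w hw => ?_
        refine mul_le_mul_of_nonneg_left ?_ (Real.rpow_nonneg (hpw w) _)
        obtain ⟨k, hk, hck⟩ := hW w hw
        calc c ^ q ≤ a w k ^ q := Real.rpow_le_rpow hc.le hck hq0
          _ ≤ _ := Finset.single_le_sum (f := fun k => a w k ^ q)
              (fun k _ => Real.rpow_nonneg (ha0 w k) _) (Finset.mem_range.2 hk)
    _ = ∑ k ∈ Finset.range (2 ^ m), ∑ w ∈ W, (wordWeight p (List.ofFn w) * a w k) ^ q := by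
        simp_rw [Finset.mul_sum]
        rw [Finset.sum_comm]
        refine Finset.sum_congr rfl fun k _ => Finset.sum_congr rfl fun w _ => ?_
        rw [Real.mul_rpow (hpw w) (ha0 w k)]
    _ ≤ ∑ k ∈ Finset.range (2 ^ m), (∑ w ∈ W, wordWeight p (List.ofFn w) * a w k) ^ q := by
        refine Finset.sum_le_sum fun k _ => ?_
        exact sum_rpow_le_rpow_sum' W _ (fun w _ => mul_nonneg (hpw w) (ha0 w k)) hq
    _ ≤ lqSum ν q m := by
        refine Finset.sum_le_sum fun k _ => ?_
        refine Real.rpow_le_rpow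
          (Finset.sum_nonneg fun w _ => mul_nonneg (hpw w) (ha0 w k)) ?_ hq0
        refine le_trans ?_ (stationary_iterate A p hp ν hν n (dyadic m k))
        exact Finset.sum_le_univ_sum_of_nonneg fun w => mul_nonneg (hpw w) (ha0 w k)

/-- Jensen's inequality for the `2 ^ m` dyadic arcs. -/
lemma lqSum_ge (ν : Measure RP1) [IsProbabilityMeasure ν] {q : ℝ} (hq : 1 < q) (m : ℕ) :
    (2:ℝ) ^ (-(m * (q - 1))) ≤ lqSum ν q m := by
  have h1 : 1 ≤ ∑ k ∈ Finset.range (2 ^ m), ν.real (dyadic m k) := by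
    calc (1:ℝ) = ν.real Set.univ := by simp
      _ ≤ _ := measureReal_le_of_cover ν _ _ _ (by
        intro x _
        obtain ⟨θ, hθ, rfl⟩ := exists_dir x
        exact Set.mem_iUnion₂.2 ⟨_, Finset.mem_range.2 (idx_lt m hθ), dir_mem_dyadic m hθ⟩)
  have h2 := Real.rpow_sum_le_const_mul_sum_rpow_of_nonneg (s := Finset.range (2 ^ m))
    (f := fun k => ν.real (dyadic m k)) hq.le (fun _ _ => measureReal_nonneg)
  have h3 : (1:ℝ) ≤ (2:ℝ) ^ (m * (q - 1)) * lqSum ν q m := by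
    calc (1:ℝ) ≤ (∑ k ∈ Finset.range (2 ^ m), ν.real (dyadic m k)) ^ q :=
          Real.one_le_rpow h1 (by linarith)
      _ ≤ _ := h2
      _ = _ := by
        rw [Finset.card_range, Real.rpow_mul (by norm_num), Real.rpow_natCast]
        push_cast
        rfl
  rw [Real.rpow_neg (by norm_num), inv_le_iff_one_le_mul₀ (by positivity)]
  linarith

lemma lqSum_pos (ν : Measure RP1) [IsProbabilityMeasure ν] {q : ℝ} (hq : 1 < q) (m : ℕ) :
    0 < lqSum ν q m := lt_of_lt_of_le (by positivity) (lqSum_ge ν hq m)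

/-- The `liminf` of reals defining the spectrum is a genuine one: `Σ ν(I)^q ≤ 2 ^ m` keeps its terms
above `-1`. So it is bounded by `t` once its terms are so infinitely often. -/
lemma lqSpectrum_le_of_frequently (ν : Measure RP1) [IsProbabilityMeasure ν] {q t : ℝ} (hq : 1 < q)
    (h : ∃ᶠ m : ℕ in atTop, -(1 / (m : ℝ)) * Real.logb 2 (lqSum ν q m) ≤ t) :
    lqSpectrum ν q ≤ t := by
  refine liminf_le_of_frequently_le h ?_
  refine isBoundedUnder_of ⟨-1, fun m => ?_⟩
  have h1 : lqSum ν q m ≤ 2 ^ m := by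
    calc lqSum ν q m ≤ ∑ k ∈ Finset.range (2 ^ m), (1:ℝ) :=
          Finset.sum_le_sum fun k _ =>
            Real.rpow_le_one measureReal_nonneg measureReal_le_one (by linarith)
      _ = 2 ^ m := by simp
  have h2 : Real.logb 2 (lqSum ν q m) ≤ m := by
    rw [Real.logb_le_iff_le_rpow (by norm_num) (lqSum_pos ν hq m), Real.rpow_natCast]
    exact h1
  rcases Nat.eq_zero_or_pos m with rfl | hm
  · simp
  · have hm' : (0:ℝ) < m := by exact_mod_cast hm
    have h4 : 1 / (m:ℝ) * Real.logb 2 (lqSum ν q m) ≤ 1 := by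
      rw [one_div_mul_eq_div, div_le_one hm']; exact h2
    show _ ≤ _
    linarith

lemma lqSpectrum_le_sub_one (ν : Measure RP1) [IsProbabilityMeasure ν] {q : ℝ} (hq : 1 < q) :
    lqSpectrum ν q ≤ q - 1 := by
  refine lqSpectrum_le_of_frequently ν hq (Eventually.frequently ?_)
  filter_upwards [eventually_gt_atTop 0] with m hm
  have hm' : (0:ℝ) < m := by exact_mod_cast hm
  have h2 : -(m * (q - 1)) ≤ Real.logb 2 (lqSum ν q m) := by
    rw [Real.le_logb_iff_rpow_le (by norm_num) (lqSum_pos ν hq m)]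
    exact lqSum_ge ν hq m
  rw [neg_mul, one_div_mul_eq_div, neg_le, le_div_iff₀ hm']
  linarith

/-- A measure charging some arc of every dyadic level with at least `η` has nonpositive
`L^q` spectrum. -/
lemma lqSpectrum_le_of_concentrated (ν : Measure RP1) [IsProbabilityMeasure ν] {q t η : ℝ}
    (hq : 1 < q) (ht : 0 < t) (hη : 0 < η)
    (h : ∀ m : ℕ, ∃ k < 2 ^ m, η ≤ ν.real (dyadic m k)) : lqSpectrum ν q ≤ t := by
  refine lqSpectrum_le_of_frequently ν hq (Eventually.frequently ?_)
  have hlim : Tendsto (fun m : ℕ => -Real.logb 2 (η ^ q) / (m:ℝ)) atTop (nhds 0) :=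
    tendsto_const_div_atTop_nhds_zero_nat _
  filter_upwards [hlim.eventually_le_const ht] with m hm
  refine le_trans ?_ hm
  obtain ⟨k, hk, hηk⟩ := h m
  have h1 : η ^ q ≤ lqSum ν q m :=
    (Real.rpow_le_rpow hη.le hηk (by linarith)).trans
      (Finset.single_le_sum (f := fun k => (ν (dyadic m k)).toReal ^ q)
        (fun k _ => Real.rpow_nonneg ENNReal.toReal_nonneg _) (Finset.mem_range.2 hk))
  have h2 : Real.logb 2 (η ^ q) ≤ Real.logb 2 (lqSum ν q m) :=
    Real.logb_le_logb_of_le (by norm_num) (by positivity) h1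
  rw [neg_mul, one_div_mul_eq_div, neg_div]
  gcongr

/-! ### Comparison with the pressure -/

/-- The norms of products of length `n` grow at most exponentially in `n`. -/
lemma exists_opNorm_sq_le {ι : Type*} [Fintype ι] (A : ι → SL2) :
    ∃ Q : ℕ, ∀ w : List ι, opNorm (wordProd A w).1 ^ 2 ≤ 2 ^ (Q * w.length) := by
  obtain ⟨Q, hQ⟩ := pow_unbounded_of_one_lt (∑ i, opNorm (A i).1 ^ 2) (one_lt_two (α := ℝ))
  refine ⟨Q, fun w => ?_⟩
  induction w with
  | nil =>
    have := opNorm_one_le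
    have := opNorm_nonneg 1
    simp only [wordProd, List.map_nil, List.prod_nil, List.length_nil, mul_zero, pow_zero]
    exact pow_le_one₀ this opNorm_one_le
  | cons i w ih =>
    have h1 : opNorm (A i).1 ^ 2 ≤ 2 ^ Q :=
      (Finset.single_le_sum (f := fun i => opNorm (A i).1 ^ 2) (fun _ _ => sq_nonneg _)
        (Finset.mem_univ i)).trans hQ.le
    have h2 : (wordProd A (i :: w)).1 = (A i).1 * (wordProd A w).1 := by
      simp [wordProd]
    rw [h2, List.length_cons, mul_add, mul_one, pow_add, mul_comm ((2:ℝ) ^ _)]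
    calc _ ≤ (opNorm (A i).1 * opNorm (wordProd A w).1) ^ 2 := by
          gcongr
          · exact opNorm_nonneg _
          · exact opNorm_mul_le _ _
      _ = opNorm (A i).1 ^ 2 * opNorm (wordProd A w).1 ^ 2 := by ring
      _ ≤ _ := mul_le_mul h1 ih (sq_nonneg _) (by positivity)

/-- Pigeonhole: among the at most `Q n + 1` possible values of `⌊log ‖A_w‖²⌋` for words of length
`n`, one carries a proportion `1/(Q n + 1)` of the pressure sum. -/
lemma exists_scale {ι : Type*} [Fintype ι] (A : ι → SL2) (p : ι → ℝ) (hp : ∀ i, 0 < p i)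
    {q t : ℝ} (ht : 0 < t) (Q : ℕ)
    (hQ : ∀ w : List ι, opNorm (wordProd A w).1 ^ 2 ≤ 2 ^ (Q * w.length)) (n : ℕ)
    (hn : ∀ w : Fin n → ι, 1 ≤ opNorm (wordProd A (List.ofFn w)).1 ^ 2) :
    ∃ (m : ℕ) (W : Finset (Fin n → ι)),
      (∀ w ∈ W, 2 ^ m ≤ opNorm (wordProd A (List.ofFn w)).1 ^ 2 ∧
        opNorm (wordProd A (List.ofFn w)).1 ^ 2 < 2 ^ (m + 1)) ∧
      ∑ w : Fin n → ι, (wordWeight p (List.ofFn w)) ^ q *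
        (opNorm (wordProd A (List.ofFn w) : Mat2)) ^ (2 * t) ≤
      (Q * n + 1) * ((2:ℝ) ^ ((m + 1) * t) * ∑ w ∈ W, wordWeight p (List.ofFn w) ^ q) := by
  classical
  choose f hf1 hf2 using fun w => exists_nat_pow_near (hn w) (one_lt_two (α := ℝ))
  have hfQ : ∀ w ∈ (Finset.univ : Finset (Fin n → ι)), f w ∈ Finset.range (Q * n + 1) := by
    intro w _
    have h1 := (hf1 w).trans (hQ (List.ofFn w))
    rw [List.length_ofFn] at h1
    have := (pow_le_pow_iff_right₀ (one_lt_two (α := ℝ))).1 h1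
    simp; omega
  set g : (Fin n → ι) → ℝ := fun w => (wordWeight p (List.ofFn w)) ^ q *
        (opNorm (wordProd A (List.ofFn w) : Mat2)) ^ (2 * t) with hg
  have hsum := Finset.sum_fiberwise_of_maps_to hfQ g
  set Z := ∑ w, g w with hZ
  obtain ⟨m, -, hm⟩ : ∃ m ∈ Finset.range (Q * n + 1), Z / (Q * n + 1) ≤
      ∑ w ∈ Finset.univ.filter (fun w => f w = m), g w := by
    refine Finset.exists_le_of_sum_le ⟨0, by simp⟩ ?_
    rw [hsum, Finset.sum_const, Finset.card_range, nsmul_eq_mul]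
    push_cast
    rw [mul_div_cancel₀ _ (by positivity)]
  refine ⟨m, Finset.univ.filter (fun w => f w = m), ?_, ?_⟩
  · intro w hw
    obtain rfl := (Finset.mem_filter.1 hw).2
    exact ⟨hf1 w, hf2 w⟩
  · rw [div_le_iff₀' (by positivity)] at hm
    refine hm.trans (mul_le_mul_of_nonneg_left ?_ (by positivity))
    rw [Finset.mul_sum]
    refine Finset.sum_le_sum fun w hw => ?_
    obtain rfl := (Finset.mem_filter.1 hw).2
    simp only [hg]
    rw [mul_comm]
    refine mul_le_mul_of_nonneg_right ?_ (Real.rpow_nonneg (wordWeight_pos p hp _).le _)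
    rw [Real.rpow_mul (opNorm_nonneg _), Real.rpow_mul (by norm_num)]
    refine Real.rpow_le_rpow (by have := opNorm_nonneg (wordProd A (List.ofFn w)).1; positivity)
      ?_ ht.le
    have := (hf2 w).le
    exact_mod_cast this

lemma eventually_log_le (C : ℝ) (Q : ℕ) {ε : ℝ} (hε : 0 < ε) :
    ∀ᶠ n : ℕ in atTop, C + Real.logb 2 (Q * n + 1) ≤ ε * n := by
  have h1 : Tendsto (fun n : ℕ => Real.log n / n) atTop (nhds 0) :=
    (Real.isLittleO_log_id_atTop.tendsto_div_nhds_zero).comp tendsto_natCast_atTop_atTop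
  have h2 : Tendsto (fun n : ℕ => (C + Real.logb 2 (Q + 1)) / n) atTop (nhds 0) :=
    tendsto_const_div_atTop_nhds_zero_nat _
  have h3 := h2.add (h1.div_const (Real.log 2))
  simp only [zero_div, add_zero] at h3
  filter_upwards [h3.eventually_le_const hε, eventually_gt_atTop 0] with n hn hn0
  have hn' : (1:ℝ) ≤ n := by exact_mod_cast hn0
  have h4 : Real.logb 2 (Q * n + 1) ≤ Real.logb 2 (Q + 1) + Real.log n / Real.log 2 := by
    rw [Real.log_div_log, ← Real.logb_mul (by positivity) (by positivity)]
    exact Real.logb_le_logb_of_le (by norm_num) (by positivity) (by nlinarith)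
  have h5 : (C + Real.logb 2 (Q + 1)) / n + Real.log n / n / Real.log 2
      = (C + Real.logb 2 (Q + 1) + Real.log n / Real.log 2) / n := by
    field_simp
  rw [h5, div_le_iff₀ (by positivity)] at hn
  linarith

/-- The bound `τ(ν,q) ≤ t` at any `t > 0` where the pressure vanishes. Only the convergence of the
pressure averages to `0` at `t` matters, and `ν` may be any stationary probability measure, whatever
its support. -/
lemma lqSpectrum_le_pressureZero {ι : Type*} [Fintype ι] (hne : Nonempty ι)
    (A : ι → SL2) (hUH : UniformlyHyperbolic A) (p : ι → ℝ) (hp : ∀ i, 0 < p i)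
    (ν : Measure RP1) [IsProbabilityMeasure ν] (hν : IsStationary A p ν) {q t : ℝ} (hq : 1 < q)
    (ht : 0 < t) (hψ : Tendsto (fun n => psiAvg A p q t n) atTop (nhds 0)) :
    lqSpectrum ν q ≤ t := by
  by_cases hconc : ∀ m : ℕ, ∃ k < 2 ^ m, (1 / 18 : ℝ) ≤ ν.real (dyadic m k)
  · exact lqSpectrum_le_of_concentrated ν hq ht (by norm_num) hconc
  push Not at hconc
  obtain ⟨M, hM⟩ := hconc
  obtain ⟨c₀, hc₀, hheavy⟩ := exists_heavy_arc ν M hM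
  obtain ⟨Q, hQ⟩ := exists_opNorm_sq_le A
  obtain ⟨c, hc, r, hr, hcr⟩ := hUH
  set α := Real.logb 2 r with hα
  have hα0 : 0 < α := Real.logb_pos (by norm_num) hr
  have hr0 : 0 < r := by linarith
  refine le_of_forall_pos_le_add fun δ hδ => lqSpectrum_le_of_frequently ν hq ?_
  rw [frequently_atTop]
  intro m₀
  -- The total error at length `n` is `2 ε n ≤ 2 (ε / α) m = δ m`.
  set ε := δ * α / 2 with hε
  have hε0 : 0 < ε := by positivity
  have hlin : ∀ C : ℝ, ∀ᶠ n : ℕ in atTop, C ≤ α * n := fun C =>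
    (tendsto_natCast_atTop_atTop.const_mul_atTop hα0).eventually_ge_atTop C
  obtain ⟨n, hn0, hnψ, hn1, hn2, hn3, hn4⟩ := ((eventually_gt_atTop 0).and
    ((hψ.eventually_const_le (neg_lt_zero.2 hε0)).and
    ((hlin (1 - 2 * Real.logb 2 c)).and ((hlin (-Real.logb 2 c)).and
    ((hlin (m₀ + 1)).and (eventually_log_le (t - Real.logb 2 (c₀ ^ q)) Q hε0)))))).exists
  have hn0' : (0:ℝ) < n := by exact_mod_cast hn0
  have hword : ∀ w : Fin n → ι, c * r ^ n ≤ opNorm (wordProd A (List.ofFn w)).1 := by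
    intro w
    have := hcr (List.ofFn w) (by
      intro h
      have := congrArg List.length h
      simp at this
      omega)
    rwa [List.length_ofFn] at this
  have hlogcr : Real.logb 2 (c * r ^ n) = Real.logb 2 c + α * n := by
    rw [Real.logb_mul hc.ne' (by positivity), Real.logb_pow]; ring
  have hcr1 : 1 ≤ c * r ^ n := by
    rw [← Real.logb_nonneg_iff (b := 2) (by norm_num) (by positivity)]
    linarith
  obtain ⟨m, W, hW, hZ⟩ := exists_scale A p hp (q := q) ht Q hQ n
    (fun w => one_le_pow₀ (hcr1.trans (hword w)))
  have hZpos : 0 < ∑ w : Fin n → ι, (wordWeight p (List.ofFn w)) ^ q *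
      (opNorm (wordProd A (List.ofFn w) : Mat2)) ^ (2 * t) := by
    refine Finset.sum_pos (fun w _ => ?_) Finset.univ_nonempty
    have h1 := wordWeight_pos p hp (List.ofFn w)
    have h2 : 0 < opNorm (wordProd A (List.ofFn w)).1 := by linarith [hword w]
    positivity
  have hWne : W.Nonempty := by
    rw [Finset.nonempty_iff_ne_empty]
    rintro rfl
    simp only [Finset.sum_empty, mul_zero] at hZ
    linarith
  have hm : α * n ≤ m := by
    obtain ⟨w, hw⟩ := hWne
    have h1 : (c * r ^ n) ^ 2 ≤ 2 ^ (m + 1) :=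
      (pow_le_pow_left₀ (by positivity) (hword w) 2).trans (hW w hw).2.le
    have h2 := Real.logb_le_logb_of_le (b := 2) (by norm_num) (by positivity) h1
    rw [Real.logb_pow, hlogcr, Real.logb_pow, Real.logb_self_eq_one (by norm_num)] at h2
    push_cast at h2
    linarith
  have hm0 : (0:ℝ) < m := lt_of_lt_of_le (by positivity) hm
  refine ⟨m, ?_, ?_⟩
  · have : (m₀:ℝ) ≤ m := by linarith
    exact_mod_cast this
  set P := ∑ w ∈ W, wordWeight p (List.ofFn w) ^ q with hP
  have hPpos : 0 < P :=
    Finset.sum_pos (fun w _ => Real.rpow_pos_of_pos (wordWeight_pos p hp _) _) hWne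
  have hlow := lqSum_lower A p hp ν hν hq.le hc₀ m n W fun w hw => hheavy _ m (hW w hw).1
  have h1 := Real.logb_le_logb_of_le (b := 2) (by norm_num) (by positivity) hlow
  rw [Real.logb_mul (by positivity) hPpos.ne'] at h1
  have h2 := Real.logb_le_logb_of_le (b := 2) (by norm_num) hZpos hZ
  rw [Real.logb_mul (by positivity) (by positivity), Real.logb_mul (by positivity) hPpos.ne',
    Real.logb_rpow (by norm_num) (by norm_num)] at h2
  unfold psiAvg at hnψ
  rw [one_div_mul_eq_div, le_div_iff₀ hn0'] at hnψ
  have h3 : -Real.logb 2 (lqSum ν q m) ≤ m * t + 2 * ε * n := by linarith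
  have h4 : 2 * ε * n ≤ δ * m := by
    rw [hε]
    have := mul_le_mul_of_nonneg_left hm hδ.le
    linarith
  rw [neg_mul, one_div_mul_eq_div, ← neg_div, div_le_iff₀ hm0]
  linarith

/-- the trivial upper bound τ(ν,q) ≤ min{τ̃(q), q−1}. -/
theorem statement9 {ι : Type} [Fintype ι] (hcard : 2 ≤ Fintype.card ι)
    (A : ι → SL2) (hUH : UniformlyHyperbolic A)
    (K : Set RP1) (hK : IsAttractor A K)
    (p : ι → ℝ) (hp : ∀ i, 0 < p i) (hp1 : ∑ i : ι, p i = 1)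
    (ν : Measure RP1) [IsProbabilityMeasure ν] (hν : IsStationary A p ν) (hνK : ν K = 1)
    (tτ : ℝ → ℝ) (htτ : ∀ q : ℝ, 1 < q → IsPressureZero A p q (tτ q)) :
    ∀ q : ℝ, 1 < q → lqSpectrum ν q ≤ min (tτ q) (q - 1) := by
  intro q hq
  obtain ⟨ht, hψ, -⟩ := htτ q hq
  have hne : Nonempty ι := Fintype.card_pos_iff.1 (by omega)
  exact le_min (lqSpectrum_le_pressureZero hne A hUH p hp ν hν hq ht hψ)
    (lqSpectrum_le_sub_one ν hq)

end

end Paper
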